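/- Let μ be an n-Ahlfors regular measure on ℝ^{n+1} with compact support X, 1 < p < ∞ and 1 ≤ q ≤ p. Then the space of Lipschitz functions on X with zero μ-mean is dense in the space of L^{p,q}(μ)-functions with zero μ-mean. -/

import Mathlib

open MeasureTheory Metric Set ENNReal NNReal

noncomputable section

/-- The support of a measure on a metric space. -/
def msupport {X : Type*} [MetricSpace X] [MeasurableSpace X] (μ : Measure X) : Set X :=
  {x | ∀ r : ℝ, 0 < r → 0 < μ (ball x r)}

/-- `μ` is `n`-Ahlfors regular with constant `C₀`:
`C₀⁻¹ r^n ≤ μ(B(x,r)) ≤ C₀ r^n` for `x ∈ supp μ` and `0 < r ≤ diam (supp μ)`. -/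
def IsAhlforsRegular {X : Type*} [MetricSpace X] [MeasurableSpace X]
    (μ : Measure X) (n : ℕ) (C₀ : ℝ) : Prop :=
  1 ≤ C₀ ∧ ∀ x ∈ msupport μ, ∀ r : ℝ, 0 < r → r ≤ Metric.diam (msupport μ) →
    ENNReal.ofReal (C₀⁻¹ * r ^ n) ≤ μ (closedBall x r) ∧
      μ (closedBall x r) ≤ ENNReal.ofReal (C₀ * r ^ n)

variable {α : Type*} [MeasurableSpace α]

/-- Distribution function `d_f(λ) = μ {|f| > λ}`. -/
def distFun (μ : Measure α) (f : α → ℝ) (lam : ℝ) : ℝ≥0∞ := μ {x | lam < |f x|}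

/-- Decreasing rearrangement `f*(t) = inf {λ ≥ 0 : d_f(λ) ≤ t}`. -/
def decRearr (μ : Measure α) (f : α → ℝ) (t : ℝ) : ℝ :=
  sInf {lam : ℝ | 0 ≤ lam ∧ distFun μ f lam ≤ ENNReal.ofReal t}

/-- Lorentz quasinorm `‖f‖_{L^{p,q}(μ)} = (∫₀^∞ (t^{1/p} f*(t))^q dt/t)^{1/q}` (finite `q`). -/
def lorentzNorm (μ : Measure α) (f : α → ℝ) (p q : ℝ) : ℝ≥0∞ :=
  (∫⁻ t in Set.Ioi (0 : ℝ),
      (ENNReal.ofReal (t ^ (1 / p) * decRearr μ f t)) ^ q / ENNReal.ofReal t) ^ (1 / q)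

/-!
In the logarithmic variable `t = exp s` the Lorentz quasinorm is the `L^q(ℝ)` norm of the profile
`s ↦ exp (s / p) * f*(exp s)`, and the dilation in `(u + v)*(t) ≤ u*(t / 2) + v*(t / 2)` becomes a
translation; hence the quasi-triangle inequality. Convergence to zero in measure forces pointwise
convergence of the rearrangements, so dominated convergence holds for the Lorentz quasinorm. It
applies to the tails of the truncations of `f`, and to bounded Lipschitz functions which approximate
a truncation in `L^1`. As the approximation also holds in `L^1`, the means of the approximating
functions tend to the mean of `f`, which is zero, and subtracting them changes nothing in the limit.
-/

open Filter Topology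

section DominatedConvergence

variable {E : Type*} [NormedAddCommGroup E] {μ : Measure α} {r : ℝ≥0∞}

lemma tendsto_eLpNorm_zero_of_dominated_convergence (hr : r ≠ ∞) {F : ℕ → α → E}
    (hF : ∀ k, AEStronglyMeasurable (F k) μ) {bound : α → ℝ} (hbound : MemLp bound r μ)
    (hle : ∀ k, ∀ᵐ x ∂μ, ‖F k x‖ ≤ bound x)
    (hlim : ∀ᵐ x ∂μ, Tendsto (fun k => F k x) atTop (𝓝 0)) :
    Tendsto (fun k => eLpNorm (F k) r μ) atTop (𝓝 0) := by
  rcases eq_or_ne r 0 with rfl | hr0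
  · simp
  have hr_pos : 0 < r.toReal := ENNReal.toReal_pos hr0 hr
  have hlintegral : Tendsto (fun k => ∫⁻ x, ‖F k x‖ₑ ^ r.toReal ∂μ) atTop (𝓝 0) := by
    rw [← lintegral_zero (μ := μ)]
    refine tendsto_lintegral_of_dominated_convergence' (fun x => ‖bound x‖ₑ ^ r.toReal)
      (fun k => (hF k).enorm.pow_const _) (fun k => ?_)
      (lintegral_rpow_enorm_lt_top_of_eLpNorm_lt_top hr0 hr hbound.2).ne ?_
    · filter_upwards [hle k] with x hx
      gcongr
      exact enorm_le_iff_norm_le.2 (hx.trans (le_abs_self _))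
    · filter_upwards [hlim] with x hx
      simpa [hr_pos] using hx.enorm.ennrpow_const r.toReal
  simpa [eLpNorm_eq_lintegral_rpow_enorm_toReal hr0 hr, hr_pos]
    using hlintegral.ennrpow_const (1 / r.toReal)

end DominatedConvergence

section DecreasingRearrangement

variable {μ : Measure α} {f g u v : α → ℝ} {t B : ℝ}

lemma decRearr_nonneg : 0 ≤ decRearr μ f t :=
  Real.sInf_nonneg fun _ h => h.1

lemma bddBelow_distFun_le : BddBelow {lam : ℝ | 0 ≤ lam ∧ distFun μ f lam ≤ ENNReal.ofReal t} :=
  ⟨0, fun _ h => h.1⟩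

lemma decRearr_le_of_distFun_le (hB : 0 ≤ B) (h : distFun μ f B ≤ ENNReal.ofReal t) :
    decRearr μ f t ≤ B :=
  csInf_le bddBelow_distFun_le ⟨hB, h⟩

lemma tendsto_distFun_atTop [IsFiniteMeasure μ] (hf : AEStronglyMeasurable f μ) :
    Tendsto (distFun μ f) atTop (𝓝 0) := by
  have hempty : ⋂ lam : ℝ, {x | lam < |f x|} = ∅ :=
    eq_empty_of_forall_notMem fun x hx => lt_irrefl |f x| (mem_iInter.1 hx |f x|)
  have h := tendsto_measure_iInter_atTop (μ := μ) (s := fun lam : ℝ => {x | lam < |f x|})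
    (fun _ => nullMeasurableSet_lt aemeasurable_const hf.norm.aemeasurable)
    (fun _ _ hlam _ hx => lt_of_le_of_lt hlam hx) ⟨0, measure_ne_top _ _⟩
  rwa [hempty, measure_empty] at h

lemma nonempty_distFun_le [IsFiniteMeasure μ] (hf : AEStronglyMeasurable f μ) (ht : 0 < t) :
    {lam : ℝ | 0 ≤ lam ∧ distFun μ f lam ≤ ENNReal.ofReal t}.Nonempty :=
  ((eventually_ge_atTop 0).and ((tendsto_distFun_atTop hf).eventually_le_const
    (ENNReal.ofReal_pos.2 ht))).exists

lemma antitoneOn_decRearr [IsFiniteMeasure μ] (hf : AEStronglyMeasurable f μ) :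
    AntitoneOn (decRearr μ f) (Ioi 0) :=
  fun _ hs _ _ hst => csInf_le_csInf bddBelow_distFun_le (nonempty_distFun_le hf hs)
    fun _ h => ⟨h.1, h.2.trans (ENNReal.ofReal_le_ofReal hst)⟩

lemma decRearr_le_decRearr [IsFiniteMeasure μ] (hg : AEStronglyMeasurable g μ)
    (h : ∀ x, |f x| ≤ |g x|) (ht : 0 < t) : decRearr μ f t ≤ decRearr μ g t :=
  csInf_le_csInf bddBelow_distFun_le (nonempty_distFun_le hg ht) fun _ hlam =>
    ⟨hlam.1, (measure_mono fun x hx => lt_of_lt_of_le hx (h x)).trans hlam.2⟩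

lemma distFun_add_le (a b : ℝ) : distFun μ (u + v) (a + b) ≤ distFun μ u a + distFun μ v b := by
  refine (measure_mono fun x (hx : a + b < |u x + v x|) => ?_).trans (measure_union_le _ _)
  exact lt_or_lt_of_add_lt_add (hx.trans_le (abs_add_le _ _))

lemma decRearr_add_le [IsFiniteMeasure μ] (hu : AEStronglyMeasurable u μ)
    (hv : AEStronglyMeasurable v μ) (ht : 0 < t) :
    decRearr μ (u + v) t ≤ decRearr μ u (t / 2) + decRearr μ v (t / 2) := by
  have hu_ne := nonempty_distFun_le hu (half_pos ht)
  have hv_ne := nonempty_distFun_le hv (half_pos ht)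
  unfold decRearr
  rw [← csInf_add hu_ne bddBelow_distFun_le hv_ne bddBelow_distFun_le]
  refine csInf_le_csInf bddBelow_distFun_le (hu_ne.add hv_ne) ?_
  rintro _ ⟨a, ⟨ha, hua⟩, b, ⟨hb, hvb⟩, rfl⟩
  refine ⟨add_nonneg ha hb, ?_⟩
  calc distFun μ (u + v) (a + b) ≤ distFun μ u a + distFun μ v b := distFun_add_le a b
    _ ≤ ENNReal.ofReal (t / 2) + ENNReal.ofReal (t / 2) := add_le_add hua hvb
    _ = ENNReal.ofReal t := by rw [← ENNReal.ofReal_add (by positivity) (by positivity), add_halves]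

lemma decRearr_le_of_abs_le (hB : 0 ≤ B) (h : ∀ x, |f x| ≤ B) : decRearr μ f t ≤ B :=
  decRearr_le_of_distFun_le hB (by simp [distFun, (h _).not_gt])

lemma decRearr_eq_zero_of_measureReal_univ_le [IsFiniteMeasure μ] (ht : μ.real univ ≤ t) :
    decRearr μ f t = 0 := by
  refine (decRearr_le_of_distFun_le le_rfl ?_).antisymm decRearr_nonneg
  calc distFun μ f 0 ≤ μ univ := measure_mono (subset_univ _)
    _ = ENNReal.ofReal (μ.real univ) := by rw [ofReal_measureReal]
    _ ≤ ENNReal.ofReal t := ENNReal.ofReal_le_ofReal ht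

lemma tendsto_decRearr_zero {ι : Type*} {l : Filter ι} {u : ι → α → ℝ}
    (hu : TendstoInMeasure μ u l 0) (ht : 0 < t) :
    Tendsto (fun i => decRearr μ (u i) t) l (𝓝 0) := by
  refine tendsto_order.2 ⟨fun a ha => .of_forall fun _ => ha.trans_le decRearr_nonneg,
    fun a ha => ?_⟩
  filter_upwards [(tendstoInMeasure_iff_norm.1 hu (a / 2) (half_pos ha)).eventually_le_const
    (ENNReal.ofReal_pos.2 ht)] with i hi
  have hle : distFun μ (u i) (a / 2) ≤ ENNReal.ofReal t :=
    (measure_mono fun x (hx : a / 2 < |u i x|) => by simpa using hx.le).trans hi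
  exact (decRearr_le_of_distFun_le (half_pos ha).le hle).trans_lt (half_lt_self ha)

end DecreasingRearrangement

/-- The function `s ↦ t ^ (1 / p) * f*(t)` in the logarithmic variable `t = exp s`. Since
`dt / t = ds`, the Lorentz quasinorm of `f` is the `L^q(ℝ)` norm of its profile. -/
def lorentzProfile (μ : Measure α) (f : α → ℝ) (p s : ℝ) : ℝ :=
  Real.exp (s / p) * decRearr μ f (Real.exp s)

section LorentzProfile

variable {μ : Measure α} {f g u v : α → ℝ} {p q s : ℝ}

lemma lorentzProfile_nonneg : 0 ≤ lorentzProfile μ f p s :=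
  mul_nonneg (Real.exp_pos _).le decRearr_nonneg

lemma setLIntegral_Ioi_div_eq_lintegral_exp (F : ℝ → ℝ≥0∞) :
    ∫⁻ t in Ioi (0 : ℝ), F t / ENNReal.ofReal t = ∫⁻ s : ℝ, F (Real.exp s) := by
  have h := lintegral_image_eq_lintegral_abs_deriv_mul MeasurableSet.univ
    (fun s _ => (Real.hasDerivAt_exp s).hasDerivWithinAt) Real.exp_injective.injOn
    fun t => F t / ENNReal.ofReal t
  rw [image_univ, Real.range_exp, setLIntegral_univ] at h
  rw [h]
  refine lintegral_congr fun s => ?_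
  rw [abs_of_pos (Real.exp_pos s)]
  exact ENNReal.mul_div_cancel (by simp [Real.exp_pos]) ENNReal.ofReal_ne_top

lemma lorentzNorm_eq_eLpNorm_lorentzProfile (hq : 0 < q) :
    lorentzNorm μ f p q = eLpNorm (lorentzProfile μ f p) (ENNReal.ofReal q) volume := by
  rw [eLpNorm_eq_lintegral_rpow_enorm_toReal (by simpa using hq) ENNReal.ofReal_ne_top,
    ENNReal.toReal_ofReal hq.le, lorentzNorm, setLIntegral_Ioi_div_eq_lintegral_exp
      fun t => ENNReal.ofReal (t ^ (1 / p) * decRearr μ f t) ^ q]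
  congr! 4 with s
  rw [Real.enorm_of_nonneg lorentzProfile_nonneg, lorentzProfile, ← Real.exp_mul,
    mul_one_div]

lemma measurable_lorentzProfile [IsFiniteMeasure μ] (hf : AEStronglyMeasurable f μ) :
    Measurable (lorentzProfile μ f p) := by
  have hanti : Antitone fun s => decRearr μ f (Real.exp s) := fun _ _ hst =>
    antitoneOn_decRearr hf (Real.exp_pos _) (Real.exp_pos _) (Real.exp_le_exp.2 hst)
  have := hanti.measurable
  unfold lorentzProfile
  fun_prop

lemma memLp_lorentzProfile [IsFiniteMeasure μ] (hf : AEStronglyMeasurable f μ) (hq : 0 < q)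
    (hfin : lorentzNorm μ f p q ≠ ∞) :
    MemLp (lorentzProfile μ f p) (ENNReal.ofReal q) volume :=
  ⟨(measurable_lorentzProfile hf).aestronglyMeasurable,
    lorentzNorm_eq_eLpNorm_lorentzProfile (μ := μ) hq ▸ hfin.lt_top⟩

lemma lorentzProfile_le_lorentzProfile [IsFiniteMeasure μ] (hg : AEStronglyMeasurable g μ)
    (h : ∀ x, |f x| ≤ |g x|) : lorentzProfile μ f p s ≤ lorentzProfile μ g p s :=
  mul_le_mul_of_nonneg_left (decRearr_le_decRearr hg h (Real.exp_pos s)) (Real.exp_pos _).le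

lemma lorentzProfile_add_le [IsFiniteMeasure μ] (hu : AEStronglyMeasurable u μ)
    (hv : AEStronglyMeasurable v μ) :
    lorentzProfile μ (u + v) p s ≤ Real.exp (Real.log 2 / p) *
      (lorentzProfile μ u p (s - Real.log 2) + lorentzProfile μ v p (s - Real.log 2)) := by
  have hhalf : Real.exp (s - Real.log 2) = Real.exp s / 2 := by
    rw [Real.exp_sub, Real.exp_log two_pos]
  have hweight : Real.exp (Real.log 2 / p) * Real.exp ((s - Real.log 2) / p)
      = Real.exp (s / p) := by
    rw [← Real.exp_add]
    ring_nf
  calc lorentzProfile μ (u + v) p s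
      ≤ Real.exp (s / p) * (decRearr μ u (Real.exp s / 2) + decRearr μ v (Real.exp s / 2)) :=
        mul_le_mul_of_nonneg_left (decRearr_add_le hu hv (Real.exp_pos s)) (Real.exp_pos _).le
    _ = _ := by
        rw [← hweight, lorentzProfile, lorentzProfile, hhalf]
        ring

lemma lorentzProfile_le_indicator [IsFiniteMeasure μ] {B : ℝ} (hB : 0 ≤ B)
    (h : ∀ x, |f x| ≤ B) : lorentzProfile μ f p s ≤
      (Iic (Real.log (μ.real univ))).indicator (fun s => Real.exp (s / p) * B) s := by
  rcases le_or_gt (μ.real univ) (Real.exp s) with hs | hs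
  · rw [lorentzProfile, decRearr_eq_zero_of_measureReal_univ_le hs, mul_zero]
    exact indicator_nonneg (fun _ _ => by positivity) s
  · have hmem : s ∈ Iic (Real.log (μ.real univ)) :=
      ((Real.lt_log_iff_exp_lt ((Real.exp_pos s).trans hs)).2 hs).le
    rw [indicator_of_mem hmem]
    exact mul_le_mul_of_nonneg_left (decRearr_le_of_abs_le hB h) (Real.exp_pos _).le

lemma memLp_indicator_Iic_exp_div (hp : 0 < p) (hq : 0 < q) (a B : ℝ) :
    MemLp ((Iic a).indicator fun s => Real.exp (s / p) * B) (ENNReal.ofReal q) volume := by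
  refine (memLp_indicator_iff_restrict measurableSet_Iic).2 (MemLp.mul_const ?_ B)
  have hmeas : Measurable fun s => Real.exp (s / p) := by fun_prop
  rw [← integrable_norm_rpow_iff hmeas.aestronglyMeasurable (by simpa using hq)
    ENNReal.ofReal_ne_top, ENNReal.toReal_ofReal hq.le]
  refine (integrableOn_exp_mul_Iic (div_pos hq hp) a).congr_fun (fun s _ => ?_) measurableSet_Iic
  simp only [Real.norm_eq_abs, Real.abs_exp, ← Real.exp_mul]
  ring_nf

end LorentzProfile

section LorentzNorm

variable {μ : Measure α} [IsFiniteMeasure μ] {p q : ℝ}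

lemma lorentzNorm_add_le {u v : α → ℝ} (hq : 0 < q) (hu : AEStronglyMeasurable u μ)
    (hv : AEStronglyMeasurable v μ) :
    lorentzNorm μ (u + v) p q ≤ ‖Real.exp (Real.log 2 / p)‖ₑ *
      (ENNReal.LpAddConst (ENNReal.ofReal q) * (lorentzNorm μ u p q + lorentzNorm μ v p q)) := by
  simp only [lorentzNorm_eq_eLpNorm_lorentzProfile hq]
  have hu' := (measurable_lorentzProfile (p := p) hu).aestronglyMeasurable (μ := volume)
  have hv' := (measurable_lorentzProfile (p := p) hv).aestronglyMeasurable (μ := volume)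
  have hshift := measurePreserving_sub_right (volume : Measure ℝ) (Real.log 2)
  calc eLpNorm (lorentzProfile μ (u + v) p) (ENNReal.ofReal q) volume
      ≤ eLpNorm (Real.exp (Real.log 2 / p) • (lorentzProfile μ u p + lorentzProfile μ v p) ∘
          fun s => s - Real.log 2) (ENNReal.ofReal q) volume :=
        eLpNorm_mono_real fun s => by
          rw [Real.norm_of_nonneg lorentzProfile_nonneg]
          exact lorentzProfile_add_le hu hv
    _ = ‖Real.exp (Real.log 2 / p)‖ₑ *
          eLpNorm (lorentzProfile μ u p + lorentzProfile μ v p) (ENNReal.ofReal q) volume := by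
        rw [eLpNorm_const_smul, eLpNorm_comp_measurePreserving (hu'.add hv') hshift]
    _ ≤ _ := by
        gcongr
        exact eLpNorm_add_le' hu' hv' _

lemma tendsto_lorentzNorm_add_zero {ι : Type*} {l : Filter ι} {u v : ι → α → ℝ} (hq : 0 < q)
    (hu : ∀ i, AEStronglyMeasurable (u i) μ) (hv : ∀ i, AEStronglyMeasurable (v i) μ)
    (hu0 : Tendsto (fun i => lorentzNorm μ (u i) p q) l (𝓝 0))
    (hv0 : Tendsto (fun i => lorentzNorm μ (v i) p q) l (𝓝 0)) :
    Tendsto (fun i => lorentzNorm μ (u i + v i) p q) l (𝓝 0) := by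
  refine tendsto_of_tendsto_of_tendsto_of_le_of_le tendsto_const_nhds ?_ (fun _ => zero_le)
    fun i => lorentzNorm_add_le hq (hu i) (hv i)
  simpa only [add_zero, mul_zero] using ENNReal.Tendsto.const_mul (ENNReal.Tendsto.const_mul
    (hu0.add hv0) (.inr (ENNReal.LpAddConst_lt_top _).ne)) (.inr enorm_ne_top)

lemma tendsto_lorentzNorm_zero_of_dominated_convergence {u : ℕ → α → ℝ} (hq : 0 < q)
    (hu : ∀ k, AEStronglyMeasurable (u k) μ) (hlim : TendstoInMeasure μ u atTop 0)
    {bound : ℝ → ℝ} (hbound : MemLp bound (ENNReal.ofReal q) volume)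
    (hle : ∀ k s, lorentzProfile μ (u k) p s ≤ bound s) :
    Tendsto (fun k => lorentzNorm μ (u k) p q) atTop (𝓝 0) := by
  simp only [lorentzNorm_eq_eLpNorm_lorentzProfile hq]
  refine tendsto_eLpNorm_zero_of_dominated_convergence ENNReal.ofReal_ne_top
    (fun k => (measurable_lorentzProfile (hu k)).aestronglyMeasurable) hbound
    (fun k => .of_forall fun s => ?_) (.of_forall fun s => ?_)
  · rw [Real.norm_of_nonneg lorentzProfile_nonneg]
    exact hle k s
  · simpa [lorentzProfile] using
      (tendsto_decRearr_zero hlim (Real.exp_pos s)).const_mul (Real.exp (s / p))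

lemma tendsto_lorentzNorm_zero_of_bounded {u : ℕ → α → ℝ} (hp : 0 < p) (hq : 0 < q)
    (hu : ∀ k, AEStronglyMeasurable (u k) μ) (hlim : TendstoInMeasure μ u atTop 0)
    {B : ℝ} (hB : 0 ≤ B) (hle : ∀ k x, |u k x| ≤ B) :
    Tendsto (fun k => lorentzNorm μ (u k) p q) atTop (𝓝 0) :=
  tendsto_lorentzNorm_zero_of_dominated_convergence hq hu hlim
    (memLp_indicator_Iic_exp_div hp hq (Real.log (μ.real univ)) B)
    fun k _ => lorentzProfile_le_indicator hB (hle k)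

lemma tendsto_lorentzNorm_const_zero {c : ℕ → ℝ} (hp : 0 < p) (hq : 0 < q)
    (hc : Tendsto c atTop (𝓝 0)) :
    Tendsto (fun k => lorentzNorm μ (fun _ => c k) p q) atTop (𝓝 0) := by
  obtain ⟨B, hB⟩ := hc.abs.bddAbove_range
  have hcB (k : ℕ) : |c k| ≤ B := hB (mem_range_self k)
  exact tendsto_lorentzNorm_zero_of_bounded hp hq (fun _ => aestronglyMeasurable_const)
    (tendstoInMeasure_of_tendsto_ae (fun _ => aestronglyMeasurable_const)
      (.of_forall fun _ => hc)) ((abs_nonneg _).trans (hcB 0)) fun k _ => hcB k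

end LorentzNorm

/-- The truncation of `y` to the interval `[-N, N]`, meant for `0 ≤ N`. -/
def clamp (N y : ℝ) : ℝ := max (-N) (min y N)

section Clamp

variable {μ : Measure α} {f : α → ℝ} {N y : ℝ}

lemma lipschitzWith_clamp (N : ℝ) : LipschitzWith 1 (clamp N) :=
  (LipschitzWith.id.min_const N).const_max (-N)

lemma abs_clamp_le (hN : 0 ≤ N) : |clamp N y| ≤ N :=
  abs_le.2 ⟨le_max_left _ _, max_le (by linarith) (min_le_right _ _)⟩

lemma clamp_of_abs_le (h : |y| ≤ N) : clamp N y = y := by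
  rw [clamp, min_eq_left (abs_le.1 h).2, max_eq_right (abs_le.1 h).1]

lemma abs_sub_clamp_le (hN : 0 ≤ N) : |y - clamp N y| ≤ |y| := by
  unfold clamp
  grind

lemma tendsto_clamp_atTop (y : ℝ) : Tendsto (fun N => clamp N y) atTop (𝓝 y) :=
  tendsto_const_nhds.congr' <| (eventually_ge_atTop |y|).mono fun _ hN => (clamp_of_abs_le hN).symm

lemma aestronglyMeasurable_clamp_comp (hf : AEStronglyMeasurable f μ) :
    AEStronglyMeasurable (clamp N ∘ f) μ :=
  (lipschitzWith_clamp N).continuous.comp_aestronglyMeasurable hf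

lemma ae_tendsto_sub_clamp_comp_zero :
    ∀ᵐ x ∂μ, Tendsto (fun k : ℕ => (f - clamp k ∘ f) x) atTop (𝓝 0) :=
  .of_forall fun x => by
    simpa using ((tendsto_clamp_atTop (f x)).comp tendsto_natCast_atTop_atTop).const_sub (f x)

lemma tendsto_eLpNorm_sub_clamp_comp_zero {r : ℝ≥0∞} (hr : r ≠ ∞) (hf : MemLp f r μ) :
    Tendsto (fun k : ℕ => eLpNorm (f - clamp k ∘ f) r μ) atTop (𝓝 0) :=
  tendsto_eLpNorm_zero_of_dominated_convergence hr
    (fun _ => hf.1.sub (aestronglyMeasurable_clamp_comp hf.1)) hf.norm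
    (fun k => .of_forall fun _ => abs_sub_clamp_le k.cast_nonneg) ae_tendsto_sub_clamp_comp_zero

lemma tendsto_lorentzNorm_sub_clamp_comp_zero [IsFiniteMeasure μ] {p q : ℝ} (hq : 0 < q)
    (hf : AEStronglyMeasurable f μ) (hfin : lorentzNorm μ f p q ≠ ∞) :
    Tendsto (fun k : ℕ => lorentzNorm μ (f - clamp k ∘ f) p q) atTop (𝓝 0) := by
  have hmeas (k : ℕ) : AEStronglyMeasurable (f - clamp k ∘ f) μ :=
    hf.sub (aestronglyMeasurable_clamp_comp hf)
  exact tendsto_lorentzNorm_zero_of_dominated_convergence hq hmeas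
    (tendstoInMeasure_of_tendsto_ae hmeas ae_tendsto_sub_clamp_comp_zero)
    (memLp_lorentzProfile hf hq hfin)
    fun k _ => lorentzProfile_le_lorentzProfile hf fun _ => abs_sub_clamp_le k.cast_nonneg

end Clamp

section LipschitzDensity

lemma norm_mul_sub_indicator_le {X : Type*} {F S T : Set X} {χ : X → ℝ} (hFS : F ⊆ S)
    (h0 : ∀ x, 0 ≤ χ x) (h1 : ∀ x, χ x ≤ 1) (hF : ∀ x ∈ F, χ x = 1) (hT : ∀ x ∉ T, χ x = 0)
    (c : ℝ) (x : X) :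
    ‖c * χ x - S.indicator (fun _ => c) x‖ ≤ ‖((S \ F) ∪ (T \ F)).indicator (fun _ => c) x‖ := by
  have hfactor : c * χ x - S.indicator (fun _ => c) x = c * (χ x - S.indicator 1 x) := by
    by_cases hxS : x ∈ S <;> simp [hxS, mul_sub]
  have hχ : |χ x - S.indicator 1 x| ≤ ((S \ F) ∪ (T \ F)).indicator 1 x := by
    have := h0 x; have := h1 x; have := hF x; have := hT x; have := @hFS x
    simp only [indicator, mem_union, Set.mem_sdiff, Pi.one_apply]
    grind
  calc ‖c * χ x - S.indicator (fun _ => c) x‖ = |c| * |χ x - S.indicator 1 x| := by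
        rw [hfactor, Real.norm_eq_abs, abs_mul]
    _ ≤ |c| * ((S \ F) ∪ (T \ F)).indicator 1 x := by gcongr
    _ = _ := by rw [norm_indicator_eq_indicator_norm]; simp [indicator]

variable {X : Type*} [PseudoEMetricSpace X] [MeasurableSpace X] [BorelSpace X]
  {μ : Measure X} [IsFiniteMeasure μ] {r : ℝ≥0∞}

lemma exists_isClosed_subset_measure_thickening_diff_lt {S : Set X} (hS : MeasurableSet S)
    {η : ℝ≥0∞} (hη : η ≠ 0) :
    ∃ F ⊆ S, IsClosed F ∧ ∃ δ > 0, μ (S \ F) + μ (thickening δ F \ F) < η := by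
  have hη2 : η / 2 ≠ 0 := by simpa using hη
  obtain ⟨F, hFS, hF, hSF⟩ := hS.exists_isClosed_sdiff_lt (measure_ne_top μ S) hη2
  have hdiff : Tendsto (fun δ => μ (thickening δ F \ F)) (𝓝[>] 0) (𝓝 0) := by
    have h := tendsto_measure_thickening_of_isClosed (μ := μ)
      ⟨1, one_pos, measure_ne_top _ _⟩ hF
    have h' := ENNReal.Tendsto.sub h (tendsto_const_nhds (x := μ F)) (.inl (measure_ne_top μ F))
    rw [tsub_self] at h'
    refine h'.congr' ?_
    filter_upwards [self_mem_nhdsWithin] with δ (hδ : 0 < δ)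
    exact (measure_sdiff (self_subset_thickening hδ F) hF.nullMeasurableSet
      (measure_ne_top _ _)).symm
  obtain ⟨δ, hδF, hδ⟩ := ((hdiff.eventually_lt_const (pos_iff_ne_zero.2 hη2)).and
    self_mem_nhdsWithin).exists
  exact ⟨F, hFS, hF, δ, hδ, (ENNReal.add_lt_add hSF hδF).trans_eq (ENNReal.add_halves η)⟩

lemma exists_lipschitzWith_eLpNorm_sub_indicator_le (hr : r ≠ ∞) (c : ℝ) {S : Set X}
    (hS : MeasurableSet S) {ε : ℝ≥0∞} (hε : ε ≠ 0) :
    ∃ (φ : X → ℝ) (K : ℝ≥0), LipschitzWith K φ ∧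
      eLpNorm (φ - S.indicator fun _ => c) r μ ≤ ε := by
  obtain ⟨η, hη, hind⟩ := exists_eLpNorm_indicator_le (μ := μ) hr c hε
  obtain ⟨F, hFS, -, δ, hδ, hμ⟩ := exists_isClosed_subset_measure_thickening_diff_lt (μ := μ) hS
    (ENNReal.coe_ne_zero.2 hη.ne')
  refine ⟨fun x => c * thickenedIndicator hδ F x, _,
    (lipschitzWith_smul c).comp (isometry_subtype_coe.lipschitz.comp
      (lipschitzWith_thickenedIndicator hδ F)), ?_⟩
  exact (eLpNorm_mono <| norm_mul_sub_indicator_le hFS (fun _ => NNReal.coe_nonneg _)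
    (fun _ => by exact_mod_cast thickenedIndicator_le_one hδ F _)
    (fun x hx => by exact_mod_cast thickenedIndicator_one hδ F hx)
    (fun x hx => by exact_mod_cast thickenedIndicator_zero hδ F hx) c).trans
      (hind _ ((measure_union_le _ _).trans hμ.le))

lemma exists_lipschitzWith_eLpNorm_sub_le (hr : r ≠ ∞) {f : X → ℝ} (hf : MemLp f r μ)
    {ε : ℝ≥0∞} (hε : ε ≠ 0) :
    ∃ (φ : X → ℝ) (K : ℝ≥0), LipschitzWith K φ ∧ eLpNorm (f - φ) r μ ≤ ε := by
  obtain ⟨φ, hφ, K, hK⟩ := hf.induction_dense hr (fun φ => ∃ K : ℝ≥0, LipschitzWith K φ)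
    (fun c S hS _ ε hε => by
      obtain ⟨φ, K, hK, hφ⟩ := exists_lipschitzWith_eLpNorm_sub_indicator_le (μ := μ) hr c hS hε
      exact ⟨φ, hφ, K, hK⟩)
    (fun _ _ ⟨_, hφ⟩ ⟨_, hψ⟩ => ⟨_, hφ.add hψ⟩)
    (fun _ ⟨_, hφ⟩ => hφ.continuous.aestronglyMeasurable) hε
  exact ⟨φ, K, hK, hφ⟩

lemma exists_lipschitzWith_abs_le_eLpNorm_sub_le (hr : r ≠ ∞) {w : X → ℝ} (hw : MemLp w r μ)
    {N : ℝ} (hN : 0 ≤ N) (hwN : ∀ x, |w x| ≤ N) {ε : ℝ≥0∞} (hε : ε ≠ 0) :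
    ∃ (φ : X → ℝ) (K : ℝ≥0), LipschitzWith K φ ∧ (∀ x, |φ x| ≤ N) ∧
      eLpNorm (w - φ) r μ ≤ ε := by
  obtain ⟨ψ, K, hψ, hψε⟩ := exists_lipschitzWith_eLpNorm_sub_le hr hw hε
  refine ⟨clamp N ∘ ψ, 1 * K, (lipschitzWith_clamp N).comp hψ, fun _ => abs_clamp_le hN,
    (eLpNorm_mono fun x => ?_).trans hψε⟩
  simpa [clamp_of_abs_le (hwN x), Real.dist_eq] using
    (lipschitzWith_clamp N).dist_le_mul (w x) (ψ x)

lemma exists_lipschitzWith_eLpNorm_one_sub_lorentzNorm_sub_le_of_bounded {p q : ℝ} (hp : 0 < p)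
    (hq : 0 < q) {w : X → ℝ} (hw : AEStronglyMeasurable w μ) {N : ℝ} (hN : 0 ≤ N)
    (hwN : ∀ x, |w x| ≤ N) {ε : ℝ≥0∞} (hε : ε ≠ 0) :
    ∃ (φ : X → ℝ) (K : ℝ≥0), LipschitzWith K φ ∧ (∀ x, |φ x| ≤ N) ∧
      eLpNorm (w - φ) 1 μ ≤ ε ∧ lorentzNorm μ (w - φ) p q ≤ ε := by
  choose φ K hφ hφN hφw using fun k : ℕ => exists_lipschitzWith_abs_le_eLpNorm_sub_le
    ENNReal.one_ne_top (MemLp.of_bound hw N (.of_forall hwN)) hN hwN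
    (ENNReal.inv_ne_zero.2 (ENNReal.natCast_ne_top k))
  have hmeas (k : ℕ) : AEStronglyMeasurable (w - φ k) μ :=
    hw.sub (hφ k).continuous.aestronglyMeasurable
  have hL1 : Tendsto (fun k => eLpNorm (w - φ k) 1 μ) atTop (𝓝 0) :=
    tendsto_of_tendsto_of_tendsto_of_le_of_le tendsto_const_nhds
      ENNReal.tendsto_inv_nat_nhds_zero (fun _ => zero_le) hφw
  have hLorentz : Tendsto (fun k => lorentzNorm μ (w - φ k) p q) atTop (𝓝 0) :=
    tendsto_lorentzNorm_zero_of_bounded hp hq hmeas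
      (tendstoInMeasure_of_tendsto_eLpNorm one_ne_zero hmeas aestronglyMeasurable_const
        (by simpa using hL1))
      (add_nonneg hN hN) fun k x => (abs_sub _ _).trans (add_le_add (hwN x) (hφN k x))
  obtain ⟨k, hk1, hk2⟩ := ((hL1.eventually_le_const (pos_iff_ne_zero.2 hε)).and
    (hLorentz.eventually_le_const (pos_iff_ne_zero.2 hε))).exists
  exact ⟨φ k, K k, hφ k, hφN k, hk1, hk2⟩

lemma exists_seq_lipschitzWith_tendsto_eLpNorm_one_lorentzNorm {p q : ℝ} (hp : 0 < p)
    (hq : 0 < q) {f : X → ℝ} (hf : Integrable f μ) (hfin : lorentzNorm μ f p q ≠ ∞) :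
    ∃ (φ : ℕ → X → ℝ) (K : ℕ → ℝ≥0), (∀ k, LipschitzWith (K k) (φ k)) ∧
      (∀ k, Integrable (φ k) μ) ∧
      Tendsto (fun k => eLpNorm (f - φ k) 1 μ) atTop (𝓝 0) ∧
      Tendsto (fun k => lorentzNorm μ (f - φ k) p q) atTop (𝓝 0) := by
  have hT (k : ℕ) : AEStronglyMeasurable (clamp k ∘ f) μ := aestronglyMeasurable_clamp_comp hf.1
  choose φ K hφ hφk hφ1 hφpq using fun k : ℕ =>
    exists_lipschitzWith_eLpNorm_one_sub_lorentzNorm_sub_le_of_bounded hp hq (hT k)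
      k.cast_nonneg (fun _ => abs_clamp_le k.cast_nonneg)
      (ENNReal.inv_ne_zero.2 (ENNReal.natCast_ne_top k))
  have hφmeas (k : ℕ) : AEStronglyMeasurable (φ k) μ := (hφ k).continuous.aestronglyMeasurable
  have hto0 {a : ℕ → ℝ≥0∞} (ha : ∀ k, a k ≤ (k : ℝ≥0∞)⁻¹) : Tendsto a atTop (𝓝 0) :=
    tendsto_of_tendsto_of_tendsto_of_le_of_le tendsto_const_nhds
      ENNReal.tendsto_inv_nat_nhds_zero (fun _ => zero_le) ha
  have hsplit (k : ℕ) : f - φ k = (f - clamp k ∘ f) + (clamp k ∘ f - φ k) :=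
    (sub_add_sub_cancel _ _ _).symm
  refine ⟨φ, K, hφ, fun k => .of_bound (hφmeas k) k (.of_forall (hφk k)), ?_, ?_⟩
  · refine tendsto_of_tendsto_of_tendsto_of_le_of_le tendsto_const_nhds ?_ (fun _ => zero_le)
      fun k => hsplit k ▸ eLpNorm_add_le (hf.1.sub (hT k)) ((hT k).sub (hφmeas k)) le_rfl
    simpa using (tendsto_eLpNorm_sub_clamp_comp_zero ENNReal.one_ne_top
      (memLp_one_iff_integrable.2 hf)).add (hto0 hφ1)
  · simp only [hsplit]
    exact tendsto_lorentzNorm_add_zero hq (fun k => hf.1.sub (hT k))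
      (fun k => (hT k).sub (hφmeas k)) (tendsto_lorentzNorm_sub_clamp_comp_zero hq hf.1 hfin)
      (hto0 hφpq)

end LipschitzDensity

theorem stmt_3_general {X : Type*} [PseudoEMetricSpace X] [MeasurableSpace X] [BorelSpace X]
    {μ : Measure X} [IsFiniteMeasure μ] {p q : ℝ} (hp : 0 < p) (hq : 0 < q) {f : X → ℝ}
    (hfin : lorentzNorm μ f p q ≠ ∞) (hf : Integrable f μ) (hmean : ∫ x, f x ∂μ = 0)
    {ε : ℝ≥0∞} (hε : ε ≠ 0) :
    ∃ (g : X → ℝ) (K : ℝ≥0), LipschitzWith K g ∧ Integrable g μ ∧ ∫ x, g x ∂μ = 0 ∧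
      lorentzNorm μ (f - g) p q < ε := by
  obtain ⟨φ, K, hφ, hφi, hφ1, hφpq⟩ :=
    exists_seq_lipschitzWith_tendsto_eLpNorm_one_lorentzNorm hp hq hf hfin
  have haverage : Tendsto (fun k => ⨍ x, φ k x ∂μ) atTop (𝓝 0) := by
    have hint := tendsto_integral_of_L1' f hf.1 (.of_forall hφi)
      (by simpa only [eLpNorm_sub_comm f] using hφ1)
    simpa [average_eq, hmean] using hint.const_mul (μ.real univ)⁻¹
  have hlim := tendsto_lorentzNorm_add_zero hq (fun k => hf.1.sub (hφi k).1)
    (fun _ => aestronglyMeasurable_const) hφpq (tendsto_lorentzNorm_const_zero hp hq haverage)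
  obtain ⟨k, hk⟩ := (hlim.eventually_lt_const (pos_iff_ne_zero.2 hε)).exists
  refine ⟨fun x => φ k x - ⨍ y, φ k y ∂μ, K k + 0, (hφ k).sub (.const _),
    (hφi k).sub (integrable_const _), integral_sub_average μ (φ k), ?_⟩
  convert hk using 2
  ext x
  exact (sub_add _ _ _).symm

/-- Let `μ` be an `n`-Ahlfors regular measure on `ℝ^{n+1}` with compact
support `X`, `1 < p < ∞` and `1 ≤ q ≤ p`. Lipschitz functions on `X` with zero `μ`-mean are
dense in the space of `L^{p,q}(μ)` functions with zero `μ`-mean. -/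
theorem stmt_3 (n : ℕ) (C₀ p q : ℝ) (hp : 1 < p) (hq : 1 ≤ q) (hqp : q ≤ p)
    (μ : Measure (EuclideanSpace ℝ (Fin (n + 1)))) [IsFiniteMeasure μ]
    (hAR : IsAhlforsRegular μ n C₀) (hX : IsCompact (msupport μ)) :
    ∀ f : EuclideanSpace ℝ (Fin (n + 1)) → ℝ, Measurable f → lorentzNorm μ f p q < ⊤ →
      Integrable f μ → (∫ x, f x ∂μ) = 0 →
      ∀ ε : ℝ, 0 < ε →
        ∃ (g : EuclideanSpace ℝ (Fin (n + 1)) → ℝ) (K : ℝ≥0),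
          LipschitzOnWith K g (msupport μ) ∧ Integrable g μ ∧ (∫ x, g x ∂μ) = 0 ∧
          lorentzNorm μ (f - g) p q < ENNReal.ofReal ε := by
  intro f _ hfin hf hmean ε hε
  obtain ⟨g, K, hK, hg⟩ := stmt_3_general (zero_lt_one.trans hp) (zero_lt_one.trans_le hq)
    hfin.ne hf hmean (ENNReal.ofReal_pos.2 hε).ne'
  exact ⟨g, K, hK.lipschitzOnWith, hg⟩
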